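/- arXiv:2510.18380 — 7 statements merged into one kernel-verified Lean document; each statement's English description precedes it below -/
import Mathlib

section
/- Let N ∈ ℕ and let M₀, …, M_{2N} ∈ ℝ be such that the (N+1)×(N+1) Hankel matrix H_N with (j,k) entry M_{j+k} (0 ≤ j, k ≤ N) is positive definite. Then there exists a nonnegative finite Borel measure μ on ℝ such that ∫_ℝ x^k dμ(x) = M_k for every k = 0, …, 2N. -/
open MeasureTheory

open scoped MatrixOrder Matrix.Norms.L2Operator in
lemma simul_diag {n : ℕ} (H K : Matrix (Fin n) (Fin n) ℝ) (hH : H.PosDef) (hK : K.IsHermitian) :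
    ∃ (G : Matrix (Fin n) (Fin n) ℝ) (d : Fin n → ℝ), IsUnit G ∧
      G.transpose * G = H ∧ G.transpose * (Matrix.diagonal d * G) = K := by
  obtain ⟨B, hB, hBH⟩ : ∃ B : Matrix (Fin n) (Fin n) ℝ, IsUnit B ∧ H = B.transpose * B := by
    obtain ⟨B, hB⟩ := CStarAlgebra.nonneg_iff_eq_star_mul_self.mp hH.posSemidef.nonneg
    rw [Matrix.star_eq_conjTranspose, Matrix.conjTranspose_eq_transpose_of_trivial] at hB
    refine ⟨B, ?_, hB⟩
    rw [Matrix.isUnit_iff_isUnit_det, isUnit_iff_ne_zero]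
    intro h0
    have := hH.det_pos
    rw [hB, Matrix.det_mul, h0] at this
    simp at this
  have hBd : IsUnit B.det := (Matrix.isUnit_iff_isUnit_det B).1 hB
  have hBt : IsUnit B.transpose.det := by rwa [Matrix.det_transpose]
  have hKt : K.transpose = K := by
    rw [← Matrix.conjTranspose_eq_transpose_of_trivial]; exact hK
  set C : Matrix (Fin n) (Fin n) ℝ := (B⁻¹).transpose * K * B⁻¹ with hCdef
  have hC : C.IsHermitian := by
    unfold Matrix.IsHermitian
    rw [Matrix.conjTranspose_eq_transpose_of_trivial, hCdef]
    simp [Matrix.transpose_mul, hKt, Matrix.mul_assoc]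
  have hBC : B.transpose * C * B = K := by
    rw [hCdef, Matrix.transpose_nonsing_inv]
    simp only [Matrix.mul_assoc]
    rw [Matrix.nonsing_inv_mul _ hBd, Matrix.mul_one, ← Matrix.mul_assoc,
      Matrix.mul_nonsing_inv _ hBt, Matrix.one_mul]
  set U : Matrix (Fin n) (Fin n) ℝ := (hC.eigenvectorUnitary : Matrix (Fin n) (Fin n) ℝ) with hU
  have hU1 : U * U.transpose = 1 := by
    rw [← Matrix.conjTranspose_eq_transpose_of_trivial]
    exact Unitary.mul_star_self_of_mem hC.eigenvectorUnitary.2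
  have hsp : C = U * Matrix.diagonal hC.eigenvalues * U.transpose := by
    have := hC.spectral_theorem
    rw [Unitary.conjStarAlgAut_apply] at this
    rw [← Matrix.conjTranspose_eq_transpose_of_trivial]
    exact this
  refine ⟨U.transpose * B, hC.eigenvalues, ?_, ?_, ?_⟩
  · refine IsUnit.mul ?_ hB
    exact IsUnit.of_mul_eq_one_right _ hU1
  · rw [Matrix.transpose_mul, Matrix.transpose_transpose, Matrix.mul_assoc,
      ← Matrix.mul_assoc U, hU1, Matrix.one_mul, hBH]
  · rw [Matrix.transpose_mul, Matrix.transpose_transpose]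
    rw [← hBC]
    conv_rhs => rw [hsp]
    simp only [Matrix.mul_assoc]

/-- If the `(N+1)×(N+1)` Hankel matrix built from `M₀,…,M_{2N}` is positive
definite, then there is a nonnegative finite Borel measure `μ` on `ℝ` whose `k`-th moments are
the `M_k` for `k = 0,…,2N`. -/
theorem exists_measure_of_hankel_posDef (N : ℕ) (M : Fin (2 * N + 1) → ℝ)
    (hPD : (Matrix.of fun j k : Fin (N + 1) =>
        M ⟨j.1 + k.1, by have := j.isLt; have := k.isLt; omega⟩).PosDef) :
    ∃ μ : Measure ℝ, IsFiniteMeasure μ ∧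
      ∀ k : Fin (2 * N + 1),
        Integrable (fun x : ℝ => x ^ (k : ℕ)) μ ∧ ∫ x : ℝ, x ^ (k : ℕ) ∂μ = M k := by
  let m : ℕ → ℝ := fun i => if h : i < 2 * N + 1 then M ⟨i, h⟩ else 0
  have hm : ∀ k : Fin (2 * N + 1), M k = m k := fun k => by
    have hk := k.2
    simp only [m]
    rw [dif_pos hk]
  let K : Matrix (Fin (N + 1)) (Fin (N + 1)) ℝ := Matrix.of fun j k => m (j.1 + k.1 + 1)
  have hK : K.IsHermitian := by
    ext j k
    simp [K, add_comm j.1 k.1]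
  obtain ⟨G, d, hG, hGH, hGK⟩ := simul_diag _ K hPD hK
  have hH : ∀ j k : Fin (N + 1), m (j.1 + k.1) = ∑ i, G i j * G i k := by
    intro j k
    have := congrFun (congrFun hGH j) k
    simp only [Matrix.mul_apply, Matrix.transpose_apply, Matrix.of_apply] at this
    rw [this, hm]
  have hGd : IsUnit G.transpose.det := by
    rw [Matrix.det_transpose]; exact (Matrix.isUnit_iff_isUnit_det G).1 hG
  have hstep : ∀ (j : ℕ) (hj : j + 1 < N + 1) (i : Fin (N + 1)),
      G i ⟨j + 1, hj⟩ = d i * G i ⟨j, by omega⟩ := by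
    intro j hj i
    have hinj : Function.Injective (G.transpose.mulVec) :=
      Matrix.mulVec_injective_of_isUnit ((Matrix.isUnit_iff_isUnit_det _).2 hGd)
    have : (fun i => G i ⟨j + 1, hj⟩) = fun i => d i * G i ⟨j, by omega⟩ := by
      apply hinj
      ext l
      have h1 := congrFun (congrFun hGK l) ⟨j, by omega⟩
      have h2 := hH l ⟨j + 1, hj⟩
      rw [Matrix.mul_apply] at h1
      simp only [Matrix.transpose_apply, Matrix.diagonal_mul, K, Matrix.of_apply] at h1
      simp only [Matrix.mulVec, dotProduct, Matrix.transpose_apply]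
      rw [h1, ← h2]
      rfl
    exact congrFun this i
  have hpow : ∀ (j : ℕ) (hj : j < N + 1) (i : Fin (N + 1)),
      G i ⟨j, hj⟩ = d i ^ j * G i 0 := by
    intro j
    induction j with
    | zero => intro hj i; simp
    | succ j ih =>
      intro hj i
      rw [hstep j hj i, ih (by omega) i]; ring
  refine ⟨∑ i, ENNReal.ofReal (G i 0 ^ 2) • Measure.dirac (d i), ?_, ?_⟩
  · refine ⟨?_⟩
    simp [Measure.finsetSum_apply, ENNReal.sum_lt_top]
  · intro k
    have hint : ∀ i ∈ (Finset.univ : Finset (Fin (N + 1))),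
        Integrable (fun x : ℝ => x ^ (k : ℕ)) (ENNReal.ofReal (G i 0 ^ 2) • Measure.dirac (d i)) :=
      fun i _ => (integrable_dirac (by simp)).smul_measure ENNReal.ofReal_ne_top
    refine ⟨integrable_finsetSum_measure.2 hint, ?_⟩
    rw [integral_finsetSum_measure hint]
    obtain ⟨a, b, ha, hb, hab⟩ : ∃ a b : ℕ, a < N + 1 ∧ b < N + 1 ∧ a + b = k := by
      have := k.2
      exact ⟨k / 2, k - k / 2, by omega, by omega, by omega⟩
    rw [hm, ← hab, hH ⟨a, ha⟩ ⟨b, hb⟩]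
    refine Finset.sum_congr rfl fun i _ => ?_
    rw [integral_smul_measure, integral_dirac, ENNReal.toReal_ofReal (sq_nonneg _), hpow a ha,
      hpow b hb, smul_eq_mul]
    ring
end

section
/- Let v ∈ ℝ, s > 0, and a > √3. Let A be the 3×3 matrix with (j,k) entry Δ_{j+k}(v, s²) and B the 3×3 matrix with (j,k) entry Δ_{j+k+1}(v, s²), for 0 ≤ j, k ≤ 2. Then both matrices (v + a s)A − B and B − (v − a s)A are positive definite. -/
open MeasureTheory Real

/-- The `k`-th moment `Δ_k(v, s²)` of the normal distribution with mean `v` and variance `s²`. -/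
noncomputable def gaussMoment (v s : ℝ) (k : ℕ) : ℝ :=
  ∫ x : ℝ, x ^ k * ((2 * π * s ^ 2) ^ (-(1 : ℝ) / 2) * Real.exp (-(x - v) ^ 2 / (2 * s ^ 2)))

noncomputable def gW (v s x : ℝ) : ℝ :=
  (2 * π * s ^ 2) ^ (-(1 : ℝ) / 2) * Real.exp (-(x - v) ^ 2 / (2 * s ^ 2))

theorem gW_eq (v s : ℝ) (hs : 0 < s) (x : ℝ) :
    gW v s x = ProbabilityTheory.gaussianPDFReal v ⟨s ^ 2, by positivity⟩ x := by
  have h : (0 : ℝ) ≤ 2 * π * s ^ 2 := by positivity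
  unfold gW ProbabilityTheory.gaussianPDFReal
  rw [Real.sqrt_eq_rpow, ← Real.rpow_neg_one, ← Real.rpow_mul (by exact h)]
  norm_num
  rfl

theorem gW_integrable (v s : ℝ) (hs : 0 < s) (k : ℕ) :
    Integrable (fun x : ℝ => x ^ k * gW v s x) := by
  have h0 : (⟨s ^ 2, by positivity⟩ : NNReal) ≠ 0 := by
    intro h
    have := congrArg NNReal.toReal h
    have h2 : s ^ 2 = 0 := this
    exact (pow_pos hs 2).ne' h2
  have h1 : Integrable (fun x : ℝ => x ^ k)
      (ProbabilityTheory.gaussianReal v ⟨s ^ 2, by positivity⟩) := by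
    exact ProbabilityTheory.integrable_pow_of_integrable_exp_mul (X := fun x => x) (t := 1)
      one_ne_zero (ProbabilityTheory.integrable_exp_mul_gaussianReal 1)
      (ProbabilityTheory.integrable_exp_mul_gaussianReal (-1)) k
  rw [ProbabilityTheory.gaussianReal_of_var_ne_zero _ h0,
    integrable_withDensity_iff_integrable_smul' (by fun_prop)
      (by simp [ProbabilityTheory.gaussianPDF])] at h1
  refine h1.congr (Filter.Eventually.of_forall fun x => ?_)
  simp only [smul_eq_mul]
  rw [gW_eq v s hs, mul_comm]
  exact congrArg _ (ProbabilityTheory.toReal_gaussianPDF x)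

theorem gM_eq (v s : ℝ) (k : ℕ) : gaussMoment v s k = ∫ x : ℝ, x ^ k * gW v s x := rfl

theorem gM_zero (v s : ℝ) (hs : 0 < s) : gaussMoment v s 0 = 1 := by
  have h0 : (⟨s ^ 2, by positivity⟩ : NNReal) ≠ 0 := by
    intro h
    have := congrArg NNReal.toReal h
    have h2 : s ^ 2 = 0 := this
    exact (pow_pos hs 2).ne' h2
  rw [gM_eq, ← ProbabilityTheory.integral_gaussianPDFReal_eq_one v h0]
  simp only [pow_zero, one_mul, gW_eq v s hs]

theorem gW_deriv (v s : ℝ) (hs : 0 < s) (x : ℝ) :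
    HasDerivAt (gW v s) (-(x - v) / s ^ 2 * gW v s x) x := by
  have h1 : HasDerivAt (fun x : ℝ => -(x - v) ^ 2 / (2 * s ^ 2))
      (-(x - v) / s ^ 2) x := by
    have := ((((hasDerivAt_id x).sub_const v).pow 2).neg).div_const (2 * s ^ 2)
    refine this.congr_deriv ?_
    simp
    field_simp
    ring
  refine (h1.exp.const_mul ((2 * π * s ^ 2) ^ (-(1 : ℝ) / 2))).congr_deriv ?_
  unfold gW
  ring

theorem gM_one (v s : ℝ) (hs : 0 < s) : gaussMoment v s 1 = v := by
  have hi := gW_integrable v s hs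
  have h := integral_eq_zero_of_hasDerivAt_of_integrable (f := gW v s)
    (f' := fun x => v / s ^ 2 * (x ^ 0 * gW v s x) - 1 / s ^ 2 * (x ^ 1 * gW v s x))
    (fun x => (gW_deriv v s hs x).congr_deriv (by ring))
    (((hi 0).const_mul _).sub ((hi 1).const_mul _)) (by simpa using hi 0)
  rw [integral_sub ((hi 0).const_mul _) ((hi 1).const_mul _), integral_const_mul,
    integral_const_mul, ← gM_eq, ← gM_eq, gM_zero v s hs] at h
  field_simp at h
  linarith

theorem gM_rec (v s : ℝ) (hs : 0 < s) (k : ℕ) :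
    gaussMoment v s (k + 2) = v * gaussMoment v s (k + 1) + (k + 1) * s ^ 2 * gaussMoment v s k := by
  have hi := gW_integrable v s hs
  have hA := (hi k).const_mul ((k : ℝ) + 1)
  have hB := (hi (k + 1)).const_mul (v / s ^ 2)
  have hC := (hi (k + 2)).const_mul (1 / s ^ 2)
  have hAB : Integrable (fun x => ((k : ℝ) + 1) * (x ^ k * gW v s x) +
      v / s ^ 2 * (x ^ (k + 1) * gW v s x)) := hA.add hB
  have h := integral_eq_zero_of_hasDerivAt_of_integrable (f := fun x => x ^ (k + 1) * gW v s x)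
    (f' := fun x => (((k : ℝ) + 1) * (x ^ k * gW v s x) + v / s ^ 2 * (x ^ (k + 1) * gW v s x))
      - 1 / s ^ 2 * (x ^ (k + 2) * gW v s x))
    (fun x => ((hasDerivAt_pow (k + 1) x).mul (gW_deriv v s hs x)).congr_deriv
      (by push_cast; ring))
    (hAB.sub hC) (hi (k + 1))
  rw [integral_sub hAB hC, integral_add hA hB, integral_const_mul,
    integral_const_mul, integral_const_mul, ← gM_eq, ← gM_eq, ← gM_eq] at h
  field_simp at h
  linarith

theorem form_pos (a e0 e1 e2 : ℝ) (ha : Real.sqrt 3 < a) (h : ¬ (e0 = 0 ∧ e1 = 0 ∧ e2 = 0)) :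
    0 < a * (e0 ^ 2 + e1 ^ 2 + 2 * e2 ^ 2) - 2 * e0 * e1 - 4 * e1 * e2 := by
  have h0 : 0 < a := (Real.sqrt_nonneg 3).trans_lt ha
  have h3 : 3 < a ^ 2 := by
    rwa [Real.sqrt_lt' h0] at ha
  have key : a * (a * (e0 ^ 2 + e1 ^ 2 + 2 * e2 ^ 2) - 2 * e0 * e1 - 4 * e1 * e2)
      = (a * e0 - e1) ^ 2 + 2 * (a * e2 - e1) ^ 2 + (a ^ 2 - 3) * e1 ^ 2 := by ring
  refine pos_of_mul_pos_right (a := a) ?_ h0.le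
  rw [key]
  by_cases h1 : e1 = 0
  · subst h1
    by_cases h2 : e2 = 0
    · have : e0 ≠ 0 := fun h' => h ⟨h', rfl, h2⟩
      simp only [h2]
      have : 0 < (a * e0) ^ 2 := by positivity
      nlinarith
    · have : 0 < (a * e2) ^ 2 := by positivity
      nlinarith [sq_nonneg (a * e0)]
  · have : 0 < (a ^ 2 - 3) * e1 ^ 2 := mul_pos (by linarith) (by positivity)
    positivity

theorem gauss_hankel_shift_posDef (v s a : ℝ) (hs : 0 < s) (ha : Real.sqrt 3 < a) :
    ((v + a * s) • (Matrix.of fun j k : Fin 3 => gaussMoment v s (j.1 + k.1))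
        - (Matrix.of fun j k : Fin 3 => gaussMoment v s (j.1 + k.1 + 1))).PosDef ∧
    ((Matrix.of fun j k : Fin 3 => gaussMoment v s (j.1 + k.1 + 1))
        - (v - a * s) • (Matrix.of fun j k : Fin 3 => gaussMoment v s (j.1 + k.1))).PosDef := by
  have m0 := gM_zero v s hs
  have m1 := gM_one v s hs
  have m2 := gM_rec v s hs 0
  have m3 := gM_rec v s hs 1
  have m4 := gM_rec v s hs 2
  have m5 := gM_rec v s hs 3
  norm_num [m0, m1] at m2
  norm_num [m2, m1] at m3
  norm_num [m2, m3] at m4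
  norm_num [m4, m3] at m5
  have hne : ∀ x : Fin 3 → ℝ, x ≠ 0 → ∀ t : ℝ, t ≠ 0 →
      ¬ (x 0 + x 1 * v + x 2 * (v ^ 2 + s ^ 2) = 0 ∧ t * (s * x 1 + 2 * x 2 * v * s) = 0 ∧
        x 2 * s ^ 2 = 0) := by
    rintro x hx t ht ⟨h0, h1, h2⟩
    have h2' : x 2 = 0 := by simpa [hs.ne'] using h2
    have h1' : x 1 = 0 := by simpa [hs.ne', h2', ht] using h1
    have h0' : x 0 = 0 := by simpa [h2', h1'] using h0
    exact hx (by ext i; fin_cases i <;> simp [h0', h1', h2'])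
  constructor
  · refine Matrix.PosDef.of_dotProduct_mulVec_pos ?_ ?_
    · ext i j
      simp [Matrix.conjTranspose_apply, add_comm]
    · intro x hx
      have := mul_pos hs (form_pos a _ _ _ ha (hne x hx 1 one_ne_zero))
      refine this.trans_eq ?_
      simp [dotProduct, Matrix.mulVec, Fin.sum_univ_three, m0, m1, m2, m3, m4, m5]
      ring
  · refine Matrix.PosDef.of_dotProduct_mulVec_pos ?_ ?_
    · ext i j
      simp [Matrix.conjTranspose_apply, add_comm]
    · intro x hx
      have := mul_pos hs (form_pos a _ _ _ ha (hne x hx (-1) (by norm_num)))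
      refine this.trans_eq ?_
      simp [dotProduct, Matrix.mulVec, Fin.sum_univ_three, m0, m1, m2, m3, m4, m5]
      ring
end

section
/- Let v ∈ ℝ, s > 0, and a ∈ ℝ. Define β_k = a Δ_k(v, s²) − k s Δ_{k−1}(v, s²) and γ_k = a Δ_k(v, s²) + k s Δ_{k−1}(v, s²) for k = 0, …, 4 (with Δ_{−1} = 0). Then the leading principal minors of the 3×3 Hankel matrices H₂(β) and H₂(γ) coincide and are given by P₁ = a, P₂ = s²(a² − 1), and P₃ = det H₂(β) = det H₂(γ) = 2 a s⁶ (a² − 3). -/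
open MeasureTheory Real

/-- The `3×3` Hankel matrix `H₂(c)` of a vector `c ∈ ℝ⁵`, with `(j,k)` entry `c_{j+k}`. -/
noncomputable def hankel2 (c : Fin 5 → ℝ) : Matrix (Fin 3) (Fin 3) ℝ :=
  Matrix.of fun j k => c ⟨j.1 + k.1, by have := j.isLt; have := k.isLt; omega⟩

lemma gaussMoment_eq (v s : ℝ) (hs : 0 < s) (k : ℕ) :
    gaussMoment v s k = iteratedDeriv k (fun t : ℝ => Real.exp (v * t + s ^ 2 * t ^ 2 / 2)) 0 := by
  obtain ⟨w, hw⟩ : ∃ w : NNReal, (w : ℝ) = s ^ 2 :=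
    ⟨Real.toNNReal (s ^ 2), Real.coe_toNNReal _ (sq_nonneg s)⟩
  have hv : w ≠ 0 := by
    intro h
    rw [h] at hw
    have : 0 < s ^ 2 := by positivity
    rw [← hw] at this
    simp at this
  have h1 := ProbabilityTheory.iteratedDeriv_mgf_zero (X := id)
    (μ := ProbabilityTheory.gaussianReal v w) (by simp) k
  rw [ProbabilityTheory.mgf_id_gaussianReal] at h1
  simp only [hw] at h1
  rw [h1, ProbabilityTheory.integral_gaussianReal_eq_integral_smul hv]
  unfold gaussMoment
  congr 1
  ext x
  simp only [ProbabilityTheory.gaussianPDFReal, Pi.pow_apply,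
    id, smul_eq_mul, hw]
  rw [neg_div 2 (1 : ℝ), Real.rpow_neg (by positivity), ← Real.sqrt_eq_rpow, mul_comm]

lemma deriv_poly_exp (v s : ℝ) (p q : ℝ → ℝ) (hp : ∀ t, HasDerivAt p (q t) t) :
    deriv (fun t : ℝ => p t * Real.exp (v * t + s ^ 2 * t ^ 2 / 2)) =
      fun t => (q t + p t * (v + s ^ 2 * t)) * Real.exp (v * t + s ^ 2 * t ^ 2 / 2) := by
  ext t
  have h : HasDerivAt (fun t : ℝ => v * t + s ^ 2 * t ^ 2 / 2) (v + s ^ 2 * t) t := by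
    have := ((hasDerivAt_id t).const_mul v).add
      ((((hasDerivAt_id t).pow 2).const_mul (s ^ 2)).div_const 2)
    refine this.congr_deriv ?_
    simp
    ring
  refine ((hp t).mul h.exp).deriv.trans ?_
  ring

lemma gaussMoments (v s : ℝ) (hs : 0 < s) :
    gaussMoment v s 0 = 1 ∧ gaussMoment v s 1 = v ∧ gaussMoment v s 2 = v ^ 2 + s ^ 2 ∧
    gaussMoment v s 3 = v ^ 3 + 3 * v * s ^ 2 ∧
    gaussMoment v s 4 = v ^ 4 + 6 * v ^ 2 * s ^ 2 + 3 * s ^ 4 := by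
  have hl : ∀ t : ℝ, HasDerivAt (fun t : ℝ => v + s ^ 2 * t) (s ^ 2) t := fun t => by
    simpa using ((hasDerivAt_id t).const_mul (s ^ 2)).const_add v
  have d0 : iteratedDeriv 0 (fun t : ℝ => Real.exp (v * t + s ^ 2 * t ^ 2 / 2)) =
      fun t => 1 * Real.exp (v * t + s ^ 2 * t ^ 2 / 2) := by simp
  have d1 : iteratedDeriv 1 (fun t : ℝ => Real.exp (v * t + s ^ 2 * t ^ 2 / 2)) =
      fun t => (v + s ^ 2 * t) * Real.exp (v * t + s ^ 2 * t ^ 2 / 2) := by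
    rw [iteratedDeriv_succ, d0, deriv_poly_exp v s (fun _ => 1) (fun _ => 0)
      (fun t => hasDerivAt_const t _)]
    simp
  have d2 : iteratedDeriv 2 (fun t : ℝ => Real.exp (v * t + s ^ 2 * t ^ 2 / 2)) =
      fun t => (s ^ 2 + (v + s ^ 2 * t) ^ 2) * Real.exp (v * t + s ^ 2 * t ^ 2 / 2) := by
    rw [iteratedDeriv_succ, d1, deriv_poly_exp v s _ _ hl]
    ext t; ring
  have d3 : iteratedDeriv 3 (fun t : ℝ => Real.exp (v * t + s ^ 2 * t ^ 2 / 2)) =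
      fun t => (3 * s ^ 2 * (v + s ^ 2 * t) + (v + s ^ 2 * t) ^ 3) *
        Real.exp (v * t + s ^ 2 * t ^ 2 / 2) := by
    rw [iteratedDeriv_succ, d2, deriv_poly_exp v s (fun t => s ^ 2 + (v + s ^ 2 * t) ^ 2) _
      (fun t => ((hl t).pow 2).const_add (s ^ 2))]
    ext t; push_cast; ring
  have d4 : iteratedDeriv 4 (fun t : ℝ => Real.exp (v * t + s ^ 2 * t ^ 2 / 2)) =
      fun t => (3 * s ^ 4 + 6 * s ^ 2 * (v + s ^ 2 * t) ^ 2 + (v + s ^ 2 * t) ^ 4) *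
        Real.exp (v * t + s ^ 2 * t ^ 2 / 2) := by
    rw [iteratedDeriv_succ, d3, deriv_poly_exp v s
      (fun t => 3 * s ^ 2 * (v + s ^ 2 * t) + (v + s ^ 2 * t) ^ 3) _
      (fun t => ((hl t).const_mul (3 * s ^ 2)).add ((hl t).pow 3))]
    ext t; push_cast; ring
  simp only [gaussMoment_eq v s hs, d0, d1, d2, d3, d4]
  refine ⟨?_, ?_, ?_, ?_, ?_⟩ <;> simp <;> ring

/-- with `β_k = aΔ_k − k s Δ_{k−1}` and `γ_k = aΔ_k + k s Δ_{k−1}` (and `Δ_{−1}=0`),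
the leading principal minors of `H₂(β)` and `H₂(γ)` coincide and are `P₁ = a`,
`P₂ = s²(a²−1)` and `P₃ = 2as⁶(a²−3)`.  (The term `k s Δ_{k−1}` vanishes for `k = 0`, so the
ℕ-subtraction `k − 1` is harmless there.) -/
theorem hankel_beta_gamma_minors (v s a : ℝ) (hs : 0 < s)
    (β γ : Fin 5 → ℝ)
    (hβ : ∀ k : Fin 5,
      β k = a * gaussMoment v s k.1 - (k.1 : ℝ) * s * gaussMoment v s (k.1 - 1))
    (hγ : ∀ k : Fin 5,
      γ k = a * gaussMoment v s k.1 + (k.1 : ℝ) * s * gaussMoment v s (k.1 - 1)) :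
    (hankel2 β 0 0 = a ∧ hankel2 γ 0 0 = a) ∧
    (hankel2 β 0 0 * hankel2 β 1 1 - hankel2 β 0 1 * hankel2 β 1 0 = s ^ 2 * (a ^ 2 - 1) ∧
      hankel2 γ 0 0 * hankel2 γ 1 1 - hankel2 γ 0 1 * hankel2 γ 1 0 = s ^ 2 * (a ^ 2 - 1)) ∧
    ((hankel2 β).det = 2 * a * s ^ 6 * (a ^ 2 - 3) ∧
      (hankel2 γ).det = 2 * a * s ^ 6 * (a ^ 2 - 3)) := by
  obtain ⟨m0, m1, m2, m3, m4⟩ := gaussMoments v s hs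
  have b0 := hβ 0
  have b1 := hβ 1
  have b2 := hβ 2
  have b3 := hβ 3
  have b4 := hβ 4
  have c0 := hγ 0
  have c1 := hγ 1
  have c2 := hγ 2
  have c3 := hγ 3
  have c4 := hγ 4
  simp [m0, m1, m2, m3, m4] at b0 b1 b2 b3 b4 c0 c1 c2 c3 c4
  have key : ∀ c : Fin 5 → ℝ, hankel2 c = !![c 0, c 1, c 2; c 1, c 2, c 3; c 2, c 3, c 4] := by
    intro c
    ext i j
    fin_cases i <;> fin_cases j <;> rfl
  rw [key β, key γ]
  simp only [Matrix.det_fin_three, Matrix.of_apply, Matrix.cons_val]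
  rw [b0, b1, b2, b3, b4, c0, c1, c2, c3, c4]
  refine ⟨⟨rfl, rfl⟩, ⟨?_, ?_⟩, ?_, ?_⟩ <;> ring
end

section
/- Let M ∈ ℝ⁵ be of three-point HyQMOM form with parameters (ρ₁, ρ₂, ρ₃, v₁, v₂, v₃), ρ₁, ρ₂, ρ₃ ≥ 0, with flux vector F(M). Define δ⁺ = max{v₁, v₂, v₃, 0} and δ⁻ = min{v₁, v₂, v₃, 0}. Then both Hankel matrices H₂(δ⁺M − F(M)) and H₂(F(M) − δ⁻M) are positive semidefinite. -/
/-- A Hankel matrix of a three-atom nonnegative measure is positive semidefinite. -/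
theorem hankel2_aux (a b d x y z : ℝ) (ha : 0 ≤ a) (hb : 0 ≤ b) (hd : 0 ≤ d)
    (c : Fin 5 → ℝ) (hc : ∀ k : Fin 5, c k = a * x ^ k.1 + b * y ^ k.1 + d * z ^ k.1) :
    (hankel2 c).PosSemidef := by
  have key : ∀ t : ℝ, (Matrix.vecMulVec (fun j : Fin 3 => t ^ j.1)
      (fun j : Fin 3 => t ^ j.1)).PosSemidef := fun t => by
    simpa using Matrix.posSemidef_vecMulVec_self_star (fun j : Fin 3 => t ^ j.1)
  have h := (((key x).smul ha).add ((key y).smul hb)).add ((key z).smul hd)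
  convert h using 1
  ext j k
  simp [hankel2, hc, Matrix.vecMulVec_apply, pow_add]

/-- for a three-point HyQMOM moment vector `M` with nonnegative weights and flux
`F`, with `δ⁺ = max{v₁,v₂,v₃,0}` and `δ⁻ = min{v₁,v₂,v₃,0}`, both `H₂(δ⁺M − F)` and
`H₂(F − δ⁻M)` are positive semidefinite. -/
theorem hyqmom_hankel_posSemidef (ρ₁ ρ₂ ρ₃ v₁ v₂ v₃ : ℝ)
    (hρ₁ : 0 ≤ ρ₁) (hρ₂ : 0 ≤ ρ₂) (hρ₃ : 0 ≤ ρ₃)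
    (M F : Fin 5 → ℝ)
    (hM : ∀ k : Fin 5, M k = ρ₁ * v₁ ^ k.1 + ρ₂ * v₂ ^ k.1 + ρ₃ * v₃ ^ k.1)
    (hF : ∀ k : Fin 5, F k = ρ₁ * v₁ ^ (k.1 + 1) + ρ₂ * v₂ ^ (k.1 + 1) + ρ₃ * v₃ ^ (k.1 + 1)) :
    (hankel2 (fun k => max (max (max v₁ v₂) v₃) 0 * M k - F k)).PosSemidef ∧
    (hankel2 (fun k => F k - min (min (min v₁ v₂) v₃) 0 * M k)).PosSemidef := by
  constructor
  · have h1 : v₁ ≤ max (max (max v₁ v₂) v₃) 0 := by simp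
    have h2 : v₂ ≤ max (max (max v₁ v₂) v₃) 0 := by simp
    have h3 : v₃ ≤ max (max (max v₁ v₂) v₃) 0 := by simp
    generalize max (max (max v₁ v₂) v₃) 0 = D at *
    refine hankel2_aux (ρ₁ * (D - v₁)) (ρ₂ * (D - v₂)) (ρ₃ * (D - v₃)) v₁ v₂ v₃
      (mul_nonneg hρ₁ (sub_nonneg.2 h1)) (mul_nonneg hρ₂ (sub_nonneg.2 h2))
      (mul_nonneg hρ₃ (sub_nonneg.2 h3)) _ fun k => ?_
    simp only [hM, hF]
    ring
  · have h1 : min (min (min v₁ v₂) v₃) 0 ≤ v₁ := by simp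
    have h2 : min (min (min v₁ v₂) v₃) 0 ≤ v₂ := by simp
    have h3 : min (min (min v₁ v₂) v₃) 0 ≤ v₃ := by simp
    generalize min (min (min v₁ v₂) v₃) 0 = D at *
    refine hankel2_aux (ρ₁ * (v₁ - D)) (ρ₂ * (v₂ - D)) (ρ₃ * (v₃ - D)) v₁ v₂ v₃
      (mul_nonneg hρ₁ (sub_nonneg.2 h1)) (mul_nonneg hρ₂ (sub_nonneg.2 h2))
      (mul_nonneg hρ₃ (sub_nonneg.2 h3)) _ fun k => ?_
    simp only [hM, hF]
    ring
end

section
/- Let M = (M₀, …, M₄) ∈ ℝ⁵ with H₂(M) positive definite, and let S = (0, 0, 0, S₃, S₄) with S₃ ≠ 0. Set a₀ = −M₀S₃², a₁ = 2S₃(M₁M₂ − M₀M₃) + S₄(M₀M₂ − M₁²), a₂ = det H₂(M). Then a₀ < 0 and a₂ > 0, the quadratic P(μ) = a₀μ² + a₁μ + a₂ has a unique positive root μ₀, and the Hankel matrix H₂(M + μS) is positive definite for every μ ∈ [0, μ₀) and positive semidefinite at μ = μ₀. -/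
lemma quad_aux (A B C : ℝ) (hA : A < 0) (hC : 0 < C) :
    ∃ m : ℝ, 0 < m ∧ A * m ^ 2 + B * m + C = 0 ∧
      ∀ x, (A * x ^ 2 + B * x + C) * m = (m - x) * (-A * x * m + C) := by
  have hd : 0 ≤ B ^ 2 - 4 * A * C := by nlinarith [sq_nonneg B, mul_pos (neg_pos.2 hA) hC]
  have hs := Real.sq_sqrt hd
  have hs0 := Real.sqrt_nonneg (B ^ 2 - 4 * A * C)
  set s := Real.sqrt (B ^ 2 - 4 * A * C)
  have hBs : 0 < B + s := by
    by_contra h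
    nlinarith [mul_pos (neg_pos.2 hA) hC]
  have hroot : A * ((B + s) / (-2 * A)) ^ 2 + B * ((B + s) / (-2 * A)) + C = 0 := by
    have := hA.ne
    field_simp
    nlinarith
  refine ⟨(B + s) / (-2 * A), div_pos hBs (by linarith), hroot, ?_⟩
  generalize (B + s) / (-2 * A) = m at hroot
  intro x
  linear_combination x * hroot

lemma hankel2_det (c : Fin 5 → ℝ) : (hankel2 c).det =
    c 0 * c 2 * c 4 + 2 * c 1 * c 2 * c 3 - c 2 ^ 3 - c 0 * c 3 ^ 2 - c 1 ^ 2 * c 4 := by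
  rw [Matrix.det_fin_three]
  simp [hankel2]
  ring

lemma hankel2_herm (c : Fin 5 → ℝ) : (hankel2 c).IsHermitian := by
  ext i j
  simp [hankel2, Nat.add_comm]

lemma hankel2_form (c : Fin 5 → ℝ) (x : Fin 3 → ℝ) :
    dotProduct (star x) ((hankel2 c).mulVec x) = c 0 * x 0 ^ 2 + 2 * c 1 * x 0 * x 1
      + c 2 * (2 * x 0 * x 2 + x 1 ^ 2) + 2 * c 3 * x 1 * x 2 + c 4 * x 2 ^ 2 := by
  simp [hankel2, dotProduct, Matrix.mulVec, Fin.sum_univ_three]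
  ring

lemma hankel2_sos (c : Fin 5 → ℝ) (x : Fin 3 → ℝ) :
    (c 0 * (c 0 * c 2 - c 1 ^ 2)) * (dotProduct (star x) ((hankel2 c).mulVec x))
    = (c 0 * c 2 - c 1 ^ 2) * (c 0 * x 0 + c 1 * x 1 + c 2 * x 2) ^ 2
      + ((c 0 * c 2 - c 1 ^ 2) * x 1 + (c 0 * c 3 - c 1 * c 2) * x 2) ^ 2
      + c 0 * (hankel2 c).det * x 2 ^ 2 := by
  rw [hankel2_form, hankel2_det]
  ring

lemma hankel2_psd (c : Fin 5 → ℝ) (h1 : 0 < c 0) (h2 : 0 < c 0 * c 2 - c 1 ^ 2)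
    (h3 : 0 ≤ (hankel2 c).det) : (hankel2 c).PosSemidef := by
  refine Matrix.PosSemidef.of_dotProduct_mulVec_nonneg (hankel2_herm c) fun x => ?_
  refine nonneg_of_mul_nonneg_right ?_ (mul_pos h1 h2)
  rw [hankel2_sos]
  positivity

lemma hankel2_pd (c : Fin 5 → ℝ) (h1 : 0 < c 0) (h2 : 0 < c 0 * c 2 - c 1 ^ 2)
    (h3 : 0 < (hankel2 c).det) : (hankel2 c).PosDef := by
  refine Matrix.PosDef.of_dotProduct_mulVec_pos (hankel2_herm c) fun {x} hx => ?_
  refine pos_of_mul_pos_right ?_ (mul_pos h1 h2).le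
  rw [hankel2_sos]
  by_cases hz : x 2 = 0
  · by_cases hy : x 1 = 0
    · have hx0 : x 0 ≠ 0 := by
        intro h
        apply hx
        ext i
        fin_cases i <;> simp [h, hy, hz]
      simp only [hz, hy, mul_zero, add_zero]
      have := h1.ne'
      positivity
    · simp only [hz, mul_zero, add_zero]
      have := h2.ne'
      have : 0 < ((c 0 * c 2 - c 1 ^ 2) * x 1) ^ 2 := by positivity
      positivity
  · positivity

/-- if `H₂(M)` is positive definite and `S = (0,0,0,S₃,S₄)` with `S₃ ≠ 0`, then
`a₀ < 0`, `a₂ > 0`, the quadratic `P(μ) = a₀μ² + a₁μ + a₂` has a unique positive root `μ₀`,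
`H₂(M + μS)` is positive definite for `μ ∈ [0, μ₀)`, and positive semidefinite at `μ = μ₀`. -/
theorem hankel_source_realizable_interval (M S : Fin 5 → ℝ)
    (hS0 : S 0 = 0) (hS1 : S 1 = 0) (hS2 : S 2 = 0) (hS3 : S 3 ≠ 0)
    (hM : (hankel2 M).PosDef) :
    (-(M 0) * (S 3) ^ 2 < 0) ∧ (0 < (hankel2 M).det) ∧
    ∃ μ₀ : ℝ, 0 < μ₀ ∧
      (-(M 0) * (S 3) ^ 2) * μ₀ ^ 2
        + (2 * S 3 * (M 1 * M 2 - M 0 * M 3) + S 4 * (M 0 * M 2 - (M 1) ^ 2)) * μ₀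
        + (hankel2 M).det = 0 ∧
      (∀ μ : ℝ, 0 < μ →
        (-(M 0) * (S 3) ^ 2) * μ ^ 2
          + (2 * S 3 * (M 1 * M 2 - M 0 * M 3) + S 4 * (M 0 * M 2 - (M 1) ^ 2)) * μ
          + (hankel2 M).det = 0 → μ = μ₀) ∧
      (∀ μ : ℝ, 0 ≤ μ → μ < μ₀ → (hankel2 (fun k => M k + μ * S k)).PosDef) ∧
      (hankel2 (fun k => M k + μ₀ * S k)).PosSemidef := by
  have h1 : 0 < M 0 := by simpa [hankel2] using hM.diag_pos (i := 0)
  have h2 : 0 < M 0 * M 2 - M 1 ^ 2 := by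
    have := hM.dotProduct_mulVec_pos (x := ![-M 1, M 0, 0])
      (fun h => h1.ne' (by simpa using congrFun h 1))
    rw [hankel2_form] at this
    simp at this
    refine pos_of_mul_pos_right (a := M 0) ?_ h1.le
    linarith
  have h3 := hM.det_pos
  have h0 : -(M 0) * (S 3) ^ 2 < 0 := by
    have : 0 < M 0 * (S 3) ^ 2 := by positivity
    linarith
  refine ⟨h0, h3, ?_⟩
  obtain ⟨m, hm, hr, hf⟩ := quad_aux _
    (2 * S 3 * (M 1 * M 2 - M 0 * M 3) + S 4 * (M 0 * M 2 - (M 1) ^ 2)) _ h0 h3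
  have hdet : ∀ x, (hankel2 (fun k => M k + x * S k)).det = (-(M 0) * (S 3) ^ 2) * x ^ 2
        + (2 * S 3 * (M 1 * M 2 - M 0 * M 3) + S 4 * (M 0 * M 2 - (M 1) ^ 2)) * x
        + (hankel2 M).det := by
    intro x
    rw [hankel2_det, hankel2_det]
    simp only [hS0, hS1, hS2]
    ring
  have hpos : ∀ x, 0 ≤ x → 0 < -(-(M 0) * (S 3) ^ 2) * x * m + (hankel2 M).det := by
    intro x hx
    have : 0 < -(-(M 0) * (S 3) ^ 2) := by linarith
    positivity
  refine ⟨m, hm, hr, ?_, ?_, ?_⟩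
  · intro x hx hxr
    have h := hf x
    rw [hxr, zero_mul] at h
    rcases mul_eq_zero.1 h.symm with h | h
    · linarith
    · exact absurd h (hpos x hx.le).ne'
  · intro x hx hxm
    apply hankel2_pd
    · simpa [hS0] using h1
    · simpa [hS0, hS1, hS2] using h2
    · rw [hdet]
      refine pos_of_mul_pos_left ?_ hm.le
      rw [hf]
      exact mul_pos (by linarith) (hpos x hx)
  · apply hankel2_psd
    · simpa [hS0] using h1
    · simpa [hS0, hS1, hS2] using h2
    · rw [hdet, hr]
end

section
/- Let a > √3 and λ > 0. Let M_L⁻, M_L⁺, M_R⁻, M_R⁺ ∈ ℝ⁵ each be of two-node Gaussian-EQMOM form (each with its own parameters having positive weights and positive σ), with flux vectors F(·) and wave speeds δ⁺(·) = max{v₁ + aσ, v₂ + aσ, 0}, δ⁻(·) = min{v₁ − aσ, v₂ − aσ, 0}. Set δ_L⁺ = max{δ⁺(M_L⁻), δ⁺(M_L⁺)}, δ_L⁻ = min{δ⁻(M_L⁻), δ⁻(M_L⁺)}, and similarly δ_R⁺, δ_R⁻, and let F̂_L = F̂(M_L⁻, M_L⁺) and F̂_R = F̂(M_R⁻, M_R⁺)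 be the HLL fluxes. Let M̄ = ½(M_L⁺ + M_R⁻) and M_new = M̄ − λ(F̂_R − F̂_L). If λ(δ_L⁺ − δ_L⁻) ≤ ½ and λ(δ_R⁺ − δ_R⁻) ≤ ½, then H₂(M_new) is positive definite. -/
open MeasureTheory Real

/-- Parameters of a two-node Gaussian-EQMOM state: positive weights and positive `σ`. -/
structure EqmomParams where
  r1 : ℝ
  r2 : ℝ
  v1 : ℝ
  v2 : ℝ
  sig : ℝ
  hr1 : 0 < r1
  hr2 : 0 < r2
  hsig : 0 < sig

/-- Moment vector `M_k = ρ₁Δ_k(v₁,σ²) + ρ₂Δ_k(v₂,σ²)`, `k = 0,…,4`. -/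
noncomputable def EqmomParams.M (W : EqmomParams) : Fin 5 → ℝ :=
  fun k => W.r1 * gaussMoment W.v1 W.sig k.1 + W.r2 * gaussMoment W.v2 W.sig k.1

/-- Flux vector `F(M) = (M₁,…,M₄,M₅)` with `M₅ = ρ₁Δ₅(v₁,σ²) + ρ₂Δ₅(v₂,σ²)`. -/
noncomputable def EqmomParams.F (W : EqmomParams) : Fin 5 → ℝ :=
  fun k => W.r1 * gaussMoment W.v1 W.sig (k.1 + 1) + W.r2 * gaussMoment W.v2 W.sig (k.1 + 1)

/-- Wave speed `δ⁺(M) = max{v₁+aσ, v₂+aσ, 0}`. -/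
noncomputable def EqmomParams.dp (W : EqmomParams) (a : ℝ) : ℝ :=
  max (max (W.v1 + a * W.sig) (W.v2 + a * W.sig)) 0

/-- Wave speed `δ⁻(M) = min{v₁−aσ, v₂−aσ, 0}`. -/
noncomputable def EqmomParams.dm (W : EqmomParams) (a : ℝ) : ℝ :=
  min (min (W.v1 - a * W.sig) (W.v2 - a * W.sig)) 0

/-- HLL numerical flux
`F̂(M⁻,M⁺) = (δ̂⁺F(M⁻) − δ̂⁻F(M⁺) + δ̂⁺δ̂⁻(M⁺ − M⁻))/(δ̂⁺ − δ̂⁻)`. -/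
noncomputable def hllFlux (dp dm : ℝ) (Mm Mp Fm Fp : Fin 5 → ℝ) : Fin 5 → ℝ :=
  fun k => (dp * Fm k - dm * Fp k + dp * dm * (Mp k - Mm k)) / (dp - dm)

lemma aux_step (m : ℝ) (w : NNReal) (n : ℕ) (f f' : ℝ → ℝ)
    (h : ∀ t, ∫ x, x ^ n * Real.exp (t * x) ∂(ProbabilityTheory.gaussianReal m w) = f t)
    (hf : ∀ t, HasDerivAt f (f' t) t) (t : ℝ) :
    ∫ x, x ^ (n + 1) * Real.exp (t * x) ∂(ProbabilityTheory.gaussianReal m w) = f' t := by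
  have h1 := ProbabilityTheory.hasDerivAt_integral_pow_mul_exp_real (X := id) (t := t)
    (μ := ProbabilityTheory.gaussianReal m w)
    (by rw [ProbabilityTheory.integrableExpSet_id_gaussianReal]; simp) n
  simp only [id] at h1
  have h2 := h1
  rw [show (fun t => ∫ x, x ^ n * Real.exp (t * x) ∂(ProbabilityTheory.gaussianReal m w)) = f
    from funext h] at h2
  exact h2.unique (hf t)

lemma aux_deriv (m w : ℝ) (P : ℝ → ℝ) (P' t : ℝ) (hP : HasDerivAt P P' (m + w * t)) :
    HasDerivAt (fun t => P (m + w * t) * Real.exp (m * t + w * t ^ 2 / 2))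
      ((P' * w + P (m + w * t) * (m + w * t)) * Real.exp (m * t + w * t ^ 2 / 2)) t := by
  have h1 : HasDerivAt (fun t => m + w * t) w t := by
    simpa using ((hasDerivAt_id t).const_mul w).const_add m
  have h2 : HasDerivAt (fun t => m * t + w * t ^ 2 / 2) (m + w * t) t := by
    have := ((hasDerivAt_id t).const_mul m).add
      ((((hasDerivAt_id t).pow 2).const_mul w).div_const 2)
    convert! this using 1
    simp; ring
  have h3 := (HasDerivAt.comp t hP h1).mul h2.exp
  convert! h3 using 1
  simp; ring

lemma aux_moments (m : ℝ) (w : NNReal) :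
    (∫ x, x ^ 0 ∂(ProbabilityTheory.gaussianReal m w) = 1) ∧
    (∫ x, x ^ 1 ∂(ProbabilityTheory.gaussianReal m w) = m) ∧
    (∫ x, x ^ 2 ∂(ProbabilityTheory.gaussianReal m w) = m ^ 2 + w) ∧
    (∫ x, x ^ 3 ∂(ProbabilityTheory.gaussianReal m w) = m ^ 3 + 3 * m * w) ∧
    (∫ x, x ^ 4 ∂(ProbabilityTheory.gaussianReal m w) = m ^ 4 + 6 * m ^ 2 * w + 3 * w ^ 2) ∧
    (∫ x, x ^ 5 ∂(ProbabilityTheory.gaussianReal m w)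
      = m ^ 5 + 10 * m ^ 3 * w + 15 * m * w ^ 2) := by
  have key : ∀ (n : ℕ) (P P' : ℝ → ℝ)
      (_ : ∀ t, ∫ x, x ^ n * Real.exp (t * x) ∂(ProbabilityTheory.gaussianReal m w)
        = P (m + w * t) * Real.exp (m * t + w * t ^ 2 / 2))
      (_ : ∀ y, HasDerivAt P (P' y) y) (t : ℝ),
      ∫ x, x ^ (n + 1) * Real.exp (t * x) ∂(ProbabilityTheory.gaussianReal m w)
        = (fun y => P' y * w + P y * y) (m + w * t) * Real.exp (m * t + w * t ^ 2 / 2) := by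
    intro n P P' h hP t
    exact aux_step m w n _ _ h (fun t => aux_deriv m w P _ t (hP _)) t
  have e0 : ∀ t, ∫ x, x ^ 0 * Real.exp (t * x) ∂(ProbabilityTheory.gaussianReal m w)
        = (fun _ => (1 : ℝ)) (m + w * t) * Real.exp (m * t + w * t ^ 2 / 2) := by
    intro t
    have := congrFun (ProbabilityTheory.mgf_id_gaussianReal (μ := m) (v := w)) t
    simpa [ProbabilityTheory.mgf] using this
  have hd : ∀ (n : ℕ) (y : ℝ), HasDerivAt (fun y : ℝ => y ^ n) (n * y ^ (n - 1)) y :=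
    fun n y => hasDerivAt_pow n y
  have e1 := key 0 _ (fun _ => 0) e0 (fun y => hasDerivAt_const y 1)
  have e2 := key 1 (fun y => y) (fun _ => 1) (fun t => by rw [e1]; ring) (fun y => hasDerivAt_id y)
  have e3 := key 2 (fun y => y ^ 2 + w) (fun y => 2 * y) (fun t => by rw [e2]; ring)
    (fun y => by convert! (hd 2 y).add_const (w : ℝ) using 1; simp)
  have e4 := key 3 (fun y => y ^ 3 + 3 * w * y) (fun y => 3 * y ^ 2 + 3 * w)
    (fun t => by rw [e3]; ring)
    (fun y => by
      convert! (hd 3 y).add ((hasDerivAt_id y).const_mul (3 * (w : ℝ))) using 1; simp)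
  have e5 := key 4 (fun y => y ^ 4 + 6 * w * y ^ 2 + 3 * w ^ 2) (fun y => 4 * y ^ 3 + 12 * w * y)
    (fun t => by rw [e4]; ring)
    (fun y => by
      convert! ((hd 4 y).add ((hd 2 y).const_mul (6 * (w : ℝ)))).add_const (3 * (w : ℝ) ^ 2)
        using 1
      simp; ring)
  have e0 := e0 0
  have e1 := e1 0
  have e2 := e2 0
  have e3 := e3 0
  have e4 := e4 0
  have e5 := e5 0
  simp only [zero_mul, Real.exp_zero, mul_one, mul_zero, add_zero, Nat.reduceAdd,
    ne_eq, OfNat.ofNat_ne_zero, not_false_eq_true, zero_pow, zero_div] at e0 e1 e2 e3 e4 e5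
  refine ⟨e0, ?_, ?_, ?_, ?_, ?_⟩
  · rw [e1]; ring
  · rw [e2]; ring
  · rw [e3]; ring
  · rw [e4]; ring
  · rw [e5]; ring

lemma aux_gaussMoment (v s : ℝ) (hs : 0 < s) (k : ℕ) :
    gaussMoment v s k
      = ∫ x, x ^ k ∂(ProbabilityTheory.gaussianReal v (Real.toNNReal (s ^ 2))) := by
  have hne : (Real.toNNReal (s ^ 2)) ≠ 0 := by
    exact (Real.toNNReal_pos.2 (by positivity)).ne'
  rw [ProbabilityTheory.integral_gaussianReal_eq_integral_smul hne]
  unfold gaussMoment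
  congr 1
  ext x
  rw [ProbabilityTheory.gaussianPDFReal_def]
  simp only [Real.coe_toNNReal _ (sq_nonneg s), smul_eq_mul]
  rw [Real.sqrt_eq_rpow, ← Real.rpow_neg (by positivity), neg_div]
  ring

/-- three-point Gauss–Hermite quadrature -/
lemma aux_quad (v s : ℝ) (hs : 0 < s) (k : ℕ) (hk : k < 6) :
    gaussMoment v s k
      = 1 / 6 * (v - √3 * s) ^ k + 2 / 3 * v ^ k + 1 / 6 * (v + √3 * s) ^ k := by
  rw [aux_gaussMoment v s hs]
  obtain ⟨h0, h1, h2, h3, h4, h5⟩ := aux_moments v (Real.toNNReal (s ^ 2))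
  have h : √3 ^ 2 = 3 := Real.sq_sqrt (by norm_num)
  simp only [Real.coe_toNNReal _ (sq_nonneg s)] at h2 h3 h4 h5
  generalize √3 = r at *
  have h' : r ^ 4 = 9 := by
    rw [show r ^ 4 = (r ^ 2) ^ 2 by ring, h]; norm_num
  interval_cases k
  · rw [h0]; ring
  · rw [h1]; ring
  · rw [h2]; ring_nf; rw [h]; ring
  · rw [h3]; ring_nf; rw [h]; try ring
  · rw [h4]; ring_nf; rw [h, h']; ring
  · rw [h5]; ring_nf; rw [h, h']; ring

noncomputable def auxQ (x : Fin 3 → ℝ) (c : Fin 5 → ℝ) : ℝ :=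
  x 0 ^ 2 * c 0 + 2 * x 0 * x 1 * c 1 + (2 * x 0 * x 2 + x 1 ^ 2) * c 2
    + 2 * x 1 * x 2 * c 3 + x 2 ^ 2 * c 4

lemma aux_three (x : Fin 3 → ℝ) (hx : x ≠ 0) (w1 w2 w3 y t : ℝ) (ht : 0 < t)
    (h1 : 0 < w1) (h2 : 0 < w2) (h3 : 0 < w3) :
    0 < w1 * (x 0 + x 1 * (y - t) + x 2 * (y - t) ^ 2) ^ 2
      + w2 * (x 0 + x 1 * y + x 2 * y ^ 2) ^ 2
      + w3 * (x 0 + x 1 * (y + t) + x 2 * (y + t) ^ 2) ^ 2 := by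
  by_contra hcon
  have p1 : 0 ≤ w1 * (x 0 + x 1 * (y - t) + x 2 * (y - t) ^ 2) ^ 2 := by positivity
  have p2 : 0 ≤ w2 * (x 0 + x 1 * y + x 2 * y ^ 2) ^ 2 := by positivity
  have p3 : 0 ≤ w3 * (x 0 + x 1 * (y + t) + x 2 * (y + t) ^ 2) ^ 2 := by positivity
  have q1 : w1 * (x 0 + x 1 * (y - t) + x 2 * (y - t) ^ 2) ^ 2 = 0 := by linarith
  have q2 : w2 * (x 0 + x 1 * y + x 2 * y ^ 2) ^ 2 = 0 := by linarith
  have q3 : w3 * (x 0 + x 1 * (y + t) + x 2 * (y + t) ^ 2) ^ 2 = 0 := by linarith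
  simp only [mul_eq_zero, h1.ne', h2.ne', h3.ne', false_or, ne_eq, OfNat.ofNat_ne_zero,
    not_false_eq_true, pow_eq_zero_iff] at q1 q2 q3
  have e2 : x 2 = 0 := by
    have : x 2 * (2 * t ^ 2) = 0 := by linear_combination q1 + q3 - 2 * q2
    rcases mul_eq_zero.1 this with h | h
    · exact h
    · exact absurd h (by positivity)
  rw [e2] at q1 q2 q3
  have e1 : x 1 = 0 := by
    have : x 1 * t = 0 := by linear_combination q3 - q2
    rcases mul_eq_zero.1 this with h | h
    · exact h
    · exact absurd h ht.ne'
  rw [e1] at q2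
  have e0 : x 0 = 0 := by linarith
  apply hx
  ext i
  fin_cases i <;> simp [e0, e1, e2]

lemma aux_one (x : Fin 3 → ℝ) (hx : x ≠ 0) (v s : ℝ) (hs : 0 < s) (al be : ℝ)
    (hm : 0 < al + be * (v - √3 * s)) (hp : 0 < al + be * (v + √3 * s)) :
    0 < auxQ x (fun k => al * gaussMoment v s k.1 + be * gaussMoment v s (k.1 + 1)) := by
  have ht : 0 < √3 * s := by positivity
  have := aux_three x hx (1 / 6 * (al + be * (v - √3 * s))) (2 / 3 * (al + be * v))
    (1 / 6 * (al + be * (v + √3 * s))) v (√3 * s) ht (by positivity) (by linarith) (by positivity)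
  simp only [auxQ]
  rw [show ((0 : Fin 5) : ℕ) = 0 from rfl, show ((1 : Fin 5) : ℕ) = 1 from rfl,
    show ((2 : Fin 5) : ℕ) = 2 from rfl, show ((3 : Fin 5) : ℕ) = 3 from rfl,
    show ((4 : Fin 5) : ℕ) = 4 from rfl]
  simp only [Nat.reduceAdd]
  rw [aux_quad v s hs 0 (by norm_num), aux_quad v s hs 1 (by norm_num),
    aux_quad v s hs 2 (by norm_num), aux_quad v s hs 3 (by norm_num),
    aux_quad v s hs 4 (by norm_num), aux_quad v s hs 5 (by norm_num)]
  refine lt_of_lt_of_eq this ?_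
  ring

lemma aux_state (x : Fin 3 → ℝ) (hx : x ≠ 0) (W : EqmomParams) (al be : ℝ)
    (hm1 : 0 < al + be * (W.v1 - √3 * W.sig)) (hp1 : 0 < al + be * (W.v1 + √3 * W.sig))
    (hm2 : 0 < al + be * (W.v2 - √3 * W.sig)) (hp2 : 0 < al + be * (W.v2 + √3 * W.sig)) :
    0 < al * auxQ x W.M + be * auxQ x W.F := by
  have h1 := mul_pos W.hr1 (aux_one x hx W.v1 W.sig W.hsig al be hm1 hp1)
  have h2 := mul_pos W.hr2 (aux_one x hx W.v2 W.sig W.hsig al be hm2 hp2)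
  refine lt_of_lt_of_eq (add_pos h1 h2) ?_
  simp only [auxQ, EqmomParams.M, EqmomParams.F]
  ring

lemma aux_bounds (x : Fin 3 → ℝ) (hx : x ≠ 0) (W : EqmomParams) (a dp dm : ℝ)
    (ha : √3 < a) (hdp : W.dp a ≤ dp) (hdm : dm ≤ W.dm a) :
    0 < auxQ x W.M ∧ 0 < auxQ x W.F - dm * auxQ x W.M ∧ 0 < dp * auxQ x W.M - auxQ x W.F
      ∧ 0 ≤ dp ∧ dm ≤ 0 ∧ dm < dp := by
  simp only [EqmomParams.dp, EqmomParams.dm, max_le_iff, le_min_iff] at hdp hdm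
  obtain ⟨⟨a1, a2⟩, a3⟩ := hdp
  obtain ⟨⟨b1, b2⟩, b3⟩ := hdm
  have hs := W.hsig
  have h3 : 0 ≤ √3 := Real.sqrt_nonneg 3
  have hc : √3 * W.sig < a * W.sig := mul_lt_mul_of_pos_right ha hs
  have hc0 : 0 ≤ √3 * W.sig := by positivity
  refine ⟨?_, ?_, ?_, a3, b3, by linarith⟩
  · have := aux_state x hx W 1 0 (by norm_num) (by norm_num) (by norm_num) (by norm_num)
    linarith
  · have := aux_state x hx W (-dm) 1 (by linarith) (by linarith) (by linarith) (by linarith)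
    linarith
  · have := aux_state x hx W dp (-1) (by linarith) (by linarith) (by linarith) (by linarith)
    linarith

lemma aux_final (lam dp dm m1 f1 m2 f2 : ℝ) (hl : 0 < lam) (hp : 0 ≤ dp) (hm : dm ≤ 0)
    (hD : dm < dp) (hC : lam * (dp - dm) ≤ 1 / 2) (hm2 : 0 < m2)
    (h1 : 0 < f1 - dm * m1) (h2 : 0 < f2 - dm * m2) :
    0 < m2 / 2 + lam * ((dp * f1 - dm * f2 + dp * dm * (m2 - m1)) / (dp - dm)) := by
  have hD' : 0 < dp - dm := by linarith
  have e : m2 / 2 + lam * ((dp * f1 - dm * f2 + dp * dm * (m2 - m1)) / (dp - dm))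
      = (lam / (dp - dm)) * (dp * (f1 - dm * m1) + (-dm) * (f2 - dm * m2))
        + (1 / 2 + lam * dm) * m2 := by
    field_simp
    ring
  rw [e]
  have hk : 0 ≤ 1 / 2 + lam * dm := by nlinarith
  have hq : 0 < lam / (dp - dm) := by positivity
  have : 0 < dp * (f1 - dm * m1) + (-dm) * (f2 - dm * m2) := by
    rcases hp.eq_or_lt with h | h
    · have : 0 < -dm := by linarith
      rw [← h]
      have := mul_pos this h2
      linarith
    · have := mul_pos h h1
      have := mul_nonneg (neg_nonneg.2 hm) h2.le
      linarith
  positivity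

/-- realizability of the collisionless HLL finite-volume update for the two-node
Gaussian-EQMOM closure under the CFL conditions `λ(δ⁺ − δ⁻) ≤ 1/2` at both interfaces:
`H₂(M_new)` is positive definite, where `M_new = ½(M_L⁺ + M_R⁻) − λ(F̂_R − F̂_L)`. -/
theorem eqmom_hll_update_posDef (a lam : ℝ) (ha : Real.sqrt 3 < a) (hlam : 0 < lam)
    (WLm WLp WRm WRp : EqmomParams)
    (dLp dLm dRp dRm : ℝ)
    (hdLp : dLp = max (WLm.dp a) (WLp.dp a))
    (hdLm : dLm = min (WLm.dm a) (WLp.dm a))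
    (hdRp : dRp = max (WRm.dp a) (WRp.dp a))
    (hdRm : dRm = min (WRm.dm a) (WRp.dm a))
    (FL FR : Fin 5 → ℝ)
    (hFL : FL = hllFlux dLp dLm WLm.M WLp.M WLm.F WLp.F)
    (hFR : FR = hllFlux dRp dRm WRm.M WRp.M WRm.F WRp.F)
    (hCFL_L : lam * (dLp - dLm) ≤ 1 / 2)
    (hCFL_R : lam * (dRp - dRm) ≤ 1 / 2) :
    (hankel2 (fun k => (WLp.M k + WRm.M k) / 2 - lam * (FR k - FL k))).PosDef := by
  have hform : ∀ x c, star x ⬝ᵥ (hankel2 c).mulVec x = auxQ x c := by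
    intro x c
    simp only [dotProduct, Matrix.mulVec, hankel2, Matrix.of_apply, Fin.sum_univ_three, auxQ,
      Pi.star_apply, star_trivial]
    simp only [Fin.val_zero, Fin.val_one, Fin.val_two, Nat.reduceAdd, Fin.mk_one, Fin.zero_eta,
      Fin.reduceFinMk]
    ring
  refine Matrix.PosDef.of_dotProduct_mulVec_pos ?_ ?_
  · ext i j
    simp only [hankel2, Matrix.conjTranspose_apply, Matrix.of_apply, star_trivial, add_comm]
  intro x hx
  rw [hform]
  have bLm := aux_bounds x hx WLm a dLp dLm ha (hdLp ▸ le_max_left _ _) (hdLm ▸ min_le_left _ _)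
  have bLp := aux_bounds x hx WLp a dLp dLm ha (hdLp ▸ le_max_right _ _) (hdLm ▸ min_le_right _ _)
  have bRm := aux_bounds x hx WRm a dRp dRm ha (hdRp ▸ le_max_left _ _) (hdRm ▸ min_le_left _ _)
  have bRp := aux_bounds x hx WRp a dRp dRm ha (hdRp ▸ le_max_right _ _) (hdRm ▸ min_le_right _ _)
  obtain ⟨_, l1, _, l2, l3, l4⟩ := bLm
  obtain ⟨l5, l6, _⟩ := bLp
  obtain ⟨r5, _, r1, r2, r3, r4⟩ := bRm
  obtain ⟨_, _, r6, _⟩ := bRp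
  have L := aux_final lam dLp dLm _ _ _ _ hlam l2 l3 l4 hCFL_L l5 l1 l6
  have R := aux_final lam (-dRm) (-dRp) (auxQ x WRp.M) (-auxQ x WRp.F) (auxQ x WRm.M)
    (-auxQ x WRm.F) hlam (by linarith) (by linarith) (by linarith) (by linarith) r5
    (by linarith) (by linarith)
  refine lt_of_lt_of_eq (add_pos L R) ?_
  rw [hFL, hFR]
  have n1 : dLp - dLm ≠ 0 := by linarith
  have n2 : dRp - dRm ≠ 0 := by linarith
  rw [show -dRm - -dRp = dRp - dRm by ring]
  simp only [auxQ, hllFlux]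
  ring
end

section
/- Let λ > 0. Let M_L⁻, M_L⁺, M_R⁻, M_R⁺ ∈ ℝ⁵ each be of three-point HyQMOM form (each with its own parameters satisfying ρ₁, ρ₂, ρ₃ > 0 and v₁ < v₂ < v₃), with flux vectors F(·) and wave speeds δ⁺(·) = max{v₁, v₂, v₃, 0}, δ⁻(·) = min{v₁, v₂, v₃, 0}. Set δ_L⁺ = max{δ⁺(M_L⁻), δ⁺(M_L⁺)}, δ_L⁻ = min{δ⁻(M_L⁻), δ⁻(M_L⁺)}, similarly δ_R⁺, δ_R⁻, and let F̂_L = F̂(M_L⁻, M_L⁺) and F̂_R = F̂(M_R⁻, M_R⁺) be the HLL fluxes. Let M̄ = ½(M_L⁺ + M_R⁻) and M_new = M̄ − λ(F̂_R − F̂_L). If λ(δ_L⁺ − δ_L⁻) ≤ ½ and λ(δ_R⁺ − δ_R⁻) ≤ ½, then H₂(M_new) is positive semidefinite. -/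
/-- Parameters of a three-point HyQMOM state: positive weights and ordered abscissas. -/
structure HyqParams where
  r1 : ℝ
  r2 : ℝ
  r3 : ℝ
  v1 : ℝ
  v2 : ℝ
  v3 : ℝ
  hr1 : 0 < r1
  hr2 : 0 < r2
  hr3 : 0 < r3
  h12 : v1 < v2
  h23 : v2 < v3

/-- Moment vector `M_k = ρ₁v₁^k + ρ₂v₂^k + ρ₃v₃^k`, `k = 0,…,4`. -/
noncomputable def HyqParams.M (W : HyqParams) : Fin 5 → ℝ :=
  fun k => W.r1 * W.v1 ^ k.1 + W.r2 * W.v2 ^ k.1 + W.r3 * W.v3 ^ k.1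

/-- Flux vector `F(M) = (M₁,…,M₄,M₅)` with `M₅ = ρ₁v₁⁵ + ρ₂v₂⁵ + ρ₃v₃⁵`. -/
noncomputable def HyqParams.F (W : HyqParams) : Fin 5 → ℝ :=
  fun k => W.r1 * W.v1 ^ (k.1 + 1) + W.r2 * W.v2 ^ (k.1 + 1) + W.r3 * W.v3 ^ (k.1 + 1)

/-- Wave speed `δ⁺(M) = max{v₁, v₂, v₃, 0}`. -/
noncomputable def HyqParams.dp (W : HyqParams) : ℝ :=
  max (max (max W.v1 W.v2) W.v3) 0

/-- Wave speed `δ⁻(M) = min{v₁, v₂, v₃, 0}`. -/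
noncomputable def HyqParams.dm (W : HyqParams) : ℝ :=
  min (min (min W.v1 W.v2) W.v3) 0

theorem hankel2_add_psd {c d : Fin 5 → ℝ} (hc : (hankel2 c).PosSemidef)
    (hd : (hankel2 d).PosSemidef) : (hankel2 (fun k => c k + d k)).PosSemidef := by
  have h := hc.add hd
  have e : hankel2 (fun k => c k + d k) = hankel2 c + hankel2 d := by
    ext i j; simp [hankel2]
  rw [e]; exact h

theorem hankel2_pt_psd (w v : ℝ) (hw : 0 ≤ w) :
    (hankel2 (fun k => w * v ^ k.1)).PosSemidef := by
  have h := (Matrix.posSemidef_vecMulVec_self_star (fun i : Fin 3 => v ^ i.1)).smul hw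
  have e : hankel2 (fun k => w * v ^ k.1)
      = w • Matrix.vecMulVec (fun i : Fin 3 => v ^ i.1) (star (fun i : Fin 3 => v ^ i.1)) := by
    ext i j; simp [hankel2, Matrix.vecMulVec_apply, pow_add]
  rw [e]; exact h

theorem hankel2_affine_psd (W : HyqParams) (dp dm a b : ℝ) (hp : W.dp ≤ dp) (hm : dm ≤ W.dm)
    (h : ∀ v, dm ≤ v → v ≤ dp → 0 ≤ a + b * v) :
    (hankel2 (fun k => a * W.M k + b * W.F k)).PosSemidef := by
  simp only [HyqParams.dp, HyqParams.dm, max_le_iff, le_min_iff] at hp hm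
  obtain ⟨⟨⟨p1, p2⟩, p3⟩, -⟩ := hp
  obtain ⟨⟨⟨m1, m2⟩, m3⟩, -⟩ := hm
  have h1 := hankel2_pt_psd _ W.v1 (mul_nonneg W.hr1.le (h _ m1 p1))
  have h2 := hankel2_pt_psd _ W.v2 (mul_nonneg W.hr2.le (h _ m2 p2))
  have h3 := hankel2_pt_psd _ W.v3 (mul_nonneg W.hr3.le (h _ m3 p3))
  convert hankel2_add_psd (hankel2_add_psd h1 h2) h3 using 3
  simp only [HyqParams.M, HyqParams.F]
  ring

theorem hll_bounds (A B : HyqParams) (dp dm : ℝ) (hp : dp = max A.dp B.dp)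
    (hm : dm = min A.dm B.dm) :
    A.dp ≤ dp ∧ B.dp ≤ dp ∧ dm ≤ A.dm ∧ dm ≤ B.dm ∧ 0 ≤ dp ∧ dm ≤ 0 ∧ 0 < dp - dm := by
  have a1 : A.dp ≤ dp := hp ▸ le_max_left _ _
  have a2 : B.dp ≤ dp := hp ▸ le_max_right _ _
  have a3 : dm ≤ A.dm := hm ▸ min_le_left _ _
  have a4 : dm ≤ B.dm := hm ▸ min_le_right _ _
  have b1 := a1
  have b3 := a3
  simp only [HyqParams.dp, HyqParams.dm, max_le_iff, le_min_iff] at b1 b3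
  refine ⟨a1, a2, a3, a4, b1.2, b3.2, ?_⟩
  have := A.h12
  linarith [b1.1.1.2, b3.1.1.1]

/-- realizability of the collisionless HLL finite-volume update for the
three-point HyQMOM closure under the CFL conditions `λ(δ⁺ − δ⁻) ≤ 1/2` at both interfaces:
`H₂(M_new)` is positive semidefinite, where `M_new = ½(M_L⁺ + M_R⁻) − λ(F̂_R − F̂_L)`. -/
theorem hyqmom_hll_update_posSemidef (lam : ℝ) (hlam : 0 < lam)
    (WLm WLp WRm WRp : HyqParams)
    (dLp dLm dRp dRm : ℝ)
    (hdLp : dLp = max WLm.dp WLp.dp)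
    (hdLm : dLm = min WLm.dm WLp.dm)
    (hdRp : dRp = max WRm.dp WRp.dp)
    (hdRm : dRm = min WRm.dm WRp.dm)
    (FL FR : Fin 5 → ℝ)
    (hFL : FL = hllFlux dLp dLm WLm.M WLp.M WLm.F WLp.F)
    (hFR : FR = hllFlux dRp dRm WRm.M WRp.M WRm.F WRp.F)
    (hCFL_L : lam * (dLp - dLm) ≤ 1 / 2)
    (hCFL_R : lam * (dRp - dRm) ≤ 1 / 2) :
    (hankel2 (fun k => (WLp.M k + WRm.M k) / 2 - lam * (FR k - FL k))).PosSemidef := by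
  obtain ⟨l1, l2, l3, l4, l5, l6, l7⟩ := hll_bounds _ _ _ _ hdLp hdLm
  obtain ⟨r1, r2, r3, r4, r5, r6, r7⟩ := hll_bounds _ _ _ _ hdRp hdRm
  clear hdLp hdLm hdRp hdRm
  obtain ⟨s, hs⟩ : ∃ s, s = lam / (dLp - dLm) := ⟨_, rfl⟩
  obtain ⟨t, ht⟩ : ∃ t, t = lam / (dRp - dRm) := ⟨_, rfl⟩
  have hs0 : 0 ≤ s := hs ▸ (div_pos hlam l7).le
  have ht0 : 0 ≤ t := ht ▸ (div_pos hlam r7).le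
  have hs1 : lam = s * (dLp - dLm) := by rw [hs]; field_simp
  have ht1 : lam = t * (dRp - dRm) := by rw [ht]; field_simp
  have A := hankel2_affine_psd WLm dLp dLm (-(s * dLp * dLm)) (s * dLp) l1 l3 (by
    intro v h1 h2
    have := mul_nonneg (mul_nonneg hs0 l5) (sub_nonneg.2 h1)
    linarith)
  have B := hankel2_affine_psd WLp dLp dLm (1 / 2 + s * dLp * dLm) (-(s * dLm)) l2 l4 (by
    intro v h1 h2
    have e1 := mul_nonneg (mul_nonneg hs0 (neg_nonneg.2 l6)) (sub_nonneg.2 h1)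
    have e2 := mul_nonneg (mul_nonneg hs0 l5) l7.le
    rw [hs1] at hCFL_L
    linarith)
  have C := hankel2_affine_psd WRm dRp dRm (1 / 2 + t * dRp * dRm) (-(t * dRp)) r1 r3 (by
    intro v h1 h2
    have e1 := mul_nonneg (mul_nonneg ht0 r5) (sub_nonneg.2 h2)
    have e2 := mul_nonneg (mul_nonneg ht0 (neg_nonneg.2 r6)) r7.le
    rw [ht1] at hCFL_R
    linarith)
  have D := hankel2_affine_psd WRp dRp dRm (-(t * dRp * dRm)) (t * dRm) r2 r4 (by
    intro v h1 h2
    have := mul_nonneg (mul_nonneg ht0 (neg_nonneg.2 r6)) (sub_nonneg.2 h2)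
    linarith)
  convert hankel2_add_psd (hankel2_add_psd A B) (hankel2_add_psd C D) using 3
  rw [hFL, hFR, hs, ht]
  simp only [hllFlux]
  ring
end
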